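/- Let V : ℝ^d → ℝ be smooth and b, ν : ℝ^d → ℝ^d be smooth vector fields satisfying the stationarity conditions ⟨b, ∇V⟩ = 0, div ν = 0 and div b = ⟨ν, ∇V⟩ everywhere on ℝ^d, and let h > 0. Then for every compactly supported smooth function u : ℝ^d → ℂ, Re ∫_{ℝ^d} (L_{V,b,ν}u)(x) · conj(u(x)) · e^{−V(x)/h} dx = h ∫_{ℝ^d} |∇u(x)|² · e^{−V(x)/h} dx; in particular this real part is nonnegative. -/

import Mathlib

/-!
Put `ρ = exp (-V / h)` and `c = b + h ν`. By the stationarity conditions the weighted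
field `ρ c` is divergence free, since
`div (ρ c) = ρ (div b + h div ν - ⟨b, ∇V⟩ / h - ⟨ν, ∇V⟩) = 0`.
Hence the real vector field `F = ρ (-h Re (conj u ∇u) + c |u|² / 2)` (`flux`) satisfies
`div F = Re (L u · conj u) ρ - h |∇u|² ρ` pointwise (`sum_pdR_flux`). Since `F` is smooth with
compact support, its divergence integrates to zero (`integral_pdR_eq_zero`).
-/

open MeasureTheory

/-- Partial derivative `∂_i f` of a real-valued function on `ℝ^d`. -/
noncomputable def pdR {d : ℕ} (f : (Fin d → ℝ) → ℝ) (i : Fin d) : (Fin d → ℝ) → ℝ :=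
  fun x => fderiv ℝ f x (Pi.single i 1)

/-- Partial derivative `∂_i u` of a complex-valued function on `ℝ^d`. -/
noncomputable def pdC {d : ℕ} (u : (Fin d → ℝ) → ℂ) (i : Fin d) : (Fin d → ℝ) → ℂ :=
  fun x => fderiv ℝ u x (Pi.single i 1)

/-- Euclidean gradient `∇V` of a real-valued function. -/
noncomputable def gradV {d : ℕ} (V : (Fin d → ℝ) → ℝ) (x : Fin d → ℝ) : Fin d → ℝ :=
  fun i => pdR V i x

/-- Laplacian `Δu` of a complex-valued function. -/
noncomputable def lapC {d : ℕ} (u : (Fin d → ℝ) → ℂ) : (Fin d → ℝ) → ℂ :=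
  fun x => ∑ i, pdC (pdC u i) i x

/-- Euclidean divergence of a vector field on `ℝ^d`. -/
noncomputable def divg {d : ℕ} (w : (Fin d → ℝ) → Fin d → ℝ) : (Fin d → ℝ) → ℝ :=
  fun x => ∑ i, pdR (fun y => w y i) i x

/-- The generator `L_{V,b,ν} u = −hΔu + ⟨∇V, ∇u⟩ + ⟨b + hν, ∇u⟩`. -/
noncomputable def Lgen {d : ℕ} (h : ℝ) (V : (Fin d → ℝ) → ℝ)
    (b ν : (Fin d → ℝ) → Fin d → ℝ) (u : (Fin d → ℝ) → ℂ) : (Fin d → ℝ) → ℂ :=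
  fun x => -(h : ℂ) * lapC u x + ∑ i, ((gradV V x i : ℝ) : ℂ) * pdC u i x
    + ∑ i, ((b x i + h * ν x i : ℝ) : ℂ) * pdC u i x

lemma contDiff_pdC {d : ℕ} {u : (Fin d → ℝ) → ℂ} (hu : ContDiff ℝ (⊤ : ℕ∞) u) (i : Fin d) :
    ContDiff ℝ (⊤ : ℕ∞) (pdC u i) :=
  (hu.fderiv_right (m := (⊤ : ℕ∞)) (by simp)).clm_apply contDiff_const

lemma contDiff_pdR {d : ℕ} {f : (Fin d → ℝ) → ℝ} (hf : ContDiff ℝ (⊤ : ℕ∞) f) (i : Fin d) :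
    ContDiff ℝ (⊤ : ℕ∞) (pdR f i) :=
  (hf.fderiv_right (m := (⊤ : ℕ∞)) (by simp)).clm_apply contDiff_const

lemma hasLineDerivAt_pdC {d : ℕ} {u : (Fin d → ℝ) → ℂ} (hu : ContDiff ℝ (⊤ : ℕ∞) u) (i : Fin d)
    (x : Fin d → ℝ) : HasLineDerivAt ℝ u (pdC u i x) x (Pi.single i 1) :=
  ((hu.differentiable (by simp)) x).hasFDerivAt.hasLineDerivAt _

lemma hasLineDerivAt_pdR {d : ℕ} {f : (Fin d → ℝ) → ℝ} (hf : ContDiff ℝ (⊤ : ℕ∞) f) (i : Fin d)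
    (x : Fin d → ℝ) : HasLineDerivAt ℝ f (pdR f i x) x (Pi.single i 1) :=
  ((hf.differentiable (by simp)) x).hasFDerivAt.hasLineDerivAt _

lemma integrable_pdR {d : ℕ} {f : (Fin d → ℝ) → ℝ} (hf : ContDiff ℝ (⊤ : ℕ∞) f)
    (hc : HasCompactSupport f) (i : Fin d) : Integrable (pdR f i) :=
  (contDiff_pdR hf i).continuous.integrable_of_hasCompactSupport
    (hc.fderiv_apply (𝕜 := ℝ) (Pi.single i 1))

lemma integral_pdR_eq_zero {d : ℕ} {f : (Fin d → ℝ) → ℝ} (hf : ContDiff ℝ (⊤ : ℕ∞) f)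
    (hc : HasCompactSupport f) (i : Fin d) : ∫ x, pdR f i x = 0 := by
  have hi : Integrable (fun x => fderiv ℝ f x (Pi.single i 1)) := integrable_pdR hf hc i
  -- integration by parts against the constant function `1`
  have := integral_mul_fderiv_eq_neg_fderiv_mul_of_integrable (μ := volume) (𝕜 := ℝ)
    (f := fun _ : Fin d → ℝ => (1 : ℝ)) (g := f) (v := Pi.single i 1)
    (by simp) (by simpa using hi)
    (by simpa using hf.continuous.integrable_of_hasCompactSupport hc)
    (fun x _ => by fun_prop) (fun x _ => (hf.differentiable (by simp)) x)
  simpa [pdR] using this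

/-- The `i`-th component of the real vector field
`exp (-V / h) (-h Re (conj u ∇u) + (b + h ν) |u|² / 2)`. -/
noncomputable def flux {d : ℕ} (h : ℝ) (V : (Fin d → ℝ) → ℝ)
    (b ν : (Fin d → ℝ) → Fin d → ℝ) (u : (Fin d → ℝ) → ℂ) (i : Fin d) (x : Fin d → ℝ) : ℝ :=
  (-h * ((pdC u i x).re * (u x).re + (pdC u i x).im * (u x).im)
    + (b x i + h * ν x i) * (((u x).re * (u x).re + (u x).im * (u x).im) / 2))
    * Real.exp (-V x / h)

lemma contDiff_flux {d : ℕ} {h : ℝ} {V : (Fin d → ℝ) → ℝ} {b ν : (Fin d → ℝ) → Fin d → ℝ}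
    {u : (Fin d → ℝ) → ℂ} (hV : ContDiff ℝ (⊤ : ℕ∞) V) (hb : ContDiff ℝ (⊤ : ℕ∞) b)
    (hν : ContDiff ℝ (⊤ : ℕ∞) ν) (hu : ContDiff ℝ (⊤ : ℕ∞) u) (i : Fin d) :
    ContDiff ℝ (⊤ : ℕ∞) (flux h V b ν u i) := by
  have hre : ∀ {w : (Fin d → ℝ) → ℂ}, ContDiff ℝ (⊤ : ℕ∞) w →
      ContDiff ℝ (⊤ : ℕ∞) (fun x => (w x).re) := fun hw => Complex.reCLM.contDiff.comp hw
  have him : ∀ {w : (Fin d → ℝ) → ℂ}, ContDiff ℝ (⊤ : ℕ∞) w →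
      ContDiff ℝ (⊤ : ℕ∞) (fun x => (w x).im) := fun hw => Complex.imCLM.contDiff.comp hw
  have hbi : ContDiff ℝ (⊤ : ℕ∞) (fun x => b x i) := contDiff_pi.1 hb i
  have hνi : ContDiff ℝ (⊤ : ℕ∞) (fun x => ν x i) := contDiff_pi.1 hν i
  have h1 := hre hu
  have h2 := him hu
  have h3 := hre (contDiff_pdC hu i)
  have h4 := him (contDiff_pdC hu i)
  exact ((contDiff_const.mul ((h3.mul h1).add (h4.mul h2))).add
    ((hbi.add (contDiff_const.mul hνi)).mul
      (((h1.mul h1).add (h2.mul h2)).div_const 2))).mul (hV.neg.div_const h).exp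

lemma hasCompactSupport_flux {d : ℕ} {h : ℝ} {V : (Fin d → ℝ) → ℝ}
    {b ν : (Fin d → ℝ) → Fin d → ℝ} {u : (Fin d → ℝ) → ℂ} (hu : HasCompactSupport u)
    (i : Fin d) : HasCompactSupport (flux h V b ν u i) :=
  HasCompactSupport.intro hu.isCompact fun x hx => by
    simp [flux, image_eq_zero_of_notMem_tsupport hx]

/-- The coefficient of `|u|² / 2` is `∂_i (ρ (b_i + h ν_i)) / ρ` with
`ρ = exp (-V / h)`; it vanishes after summation over `i` by the stationarity conditions. -/
lemma pdR_flux {d : ℕ} {h : ℝ} {V : (Fin d → ℝ) → ℝ} {b ν : (Fin d → ℝ) → Fin d → ℝ}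
    {u : (Fin d → ℝ) → ℂ} (hh : h ≠ 0) (hV : ContDiff ℝ (⊤ : ℕ∞) V)
    (hb : ContDiff ℝ (⊤ : ℕ∞) b) (hν : ContDiff ℝ (⊤ : ℕ∞) ν) (hu : ContDiff ℝ (⊤ : ℕ∞) u)
    (i : Fin d) (x : Fin d → ℝ) :
    pdR (flux h V b ν u i) i x =
      (-h * (pdC (pdC u i) i x * (starRingEnd ℂ) (u x)).re - h * Complex.normSq (pdC u i x)
        + (gradV V x i + (b x i + h * ν x i)) * (pdC u i x * (starRingEnd ℂ) (u x)).re
        + (pdR (fun y => b y i) i x + h * pdR (fun y => ν y i) i x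
            - (b x i * gradV V x i) / h - ν x i * gradV V x i) * (Complex.normSq (u x) / 2))
        * Real.exp (-V x / h) := by
  have hF := hasLineDerivAt_pdR (contDiff_flux (h := h) hV hb hν hu i) i x
  have hU : HasDerivAt (fun t : ℝ => u (x + t • Pi.single i 1)) (pdC u i x) 0 :=
    hasLineDerivAt_pdC hu i x
  have hW : HasDerivAt (fun t : ℝ => pdC u i (x + t • Pi.single i 1)) (pdC (pdC u i) i x) 0 :=
    hasLineDerivAt_pdC (contDiff_pdC hu i) i x
  have hB : HasDerivAt (fun t : ℝ => b (x + t • Pi.single i 1) i)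
      (pdR (fun y => b y i) i x) 0 := hasLineDerivAt_pdR (contDiff_pi.1 hb i) i x
  have hN : HasDerivAt (fun t : ℝ => ν (x + t • Pi.single i 1) i)
      (pdR (fun y => ν y i) i x) 0 := hasLineDerivAt_pdR (contDiff_pi.1 hν i) i x
  have hv : HasDerivAt (fun t : ℝ => V (x + t • Pi.single i 1)) (pdR V i x) 0 :=
    hasLineDerivAt_pdR hV i x
  have hre : ∀ {w : ℝ → ℂ} {w' : ℂ}, HasDerivAt w w' 0 →
      HasDerivAt (fun t => (w t).re) w'.re 0 :=
    fun hw => Complex.reCLM.hasFDerivAt.comp_hasDerivAt (0 : ℝ) hw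
  have him : ∀ {w : ℝ → ℂ} {w' : ℂ}, HasDerivAt w w' 0 →
      HasDerivAt (fun t => (w t).im) w'.im 0 :=
    fun hw => Complex.imCLM.hasFDerivAt.comp_hasDerivAt (0 : ℝ) hw
  have h1 := hre hU
  have h2 := him hU
  have h3 := hre hW
  have h4 := him hW
  have hG := ((((h3.mul h1).add (h4.mul h2)).const_mul (-h)).add
    ((hB.add (hN.const_mul h)).mul
      (((h1.mul h1).add (h2.mul h2)).div_const 2))).mul (hv.neg.div_const h).exp
  have key := HasDerivAt.unique hF hG
  rw [key]
  simp [gradV, Complex.normSq_apply]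
  field_simp
  ring

lemma sum_pdR_flux {d : ℕ} {h : ℝ} {V : (Fin d → ℝ) → ℝ} {b ν : (Fin d → ℝ) → Fin d → ℝ}
    {u : (Fin d → ℝ) → ℂ} (hh : h ≠ 0) (hV : ContDiff ℝ (⊤ : ℕ∞) V)
    (hb : ContDiff ℝ (⊤ : ℕ∞) b) (hν : ContDiff ℝ (⊤ : ℕ∞) ν) (hu : ContDiff ℝ (⊤ : ℕ∞) u)
    (hstat₁ : ∀ x, ∑ i, b x i * gradV V x i = 0)
    (hstat₂ : ∀ x, divg ν x = 0)
    (hstat₃ : ∀ x, divg b x = ∑ i, ν x i * gradV V x i) (x : Fin d → ℝ) :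
    ∑ i, pdR (flux h V b ν u i) i x =
      (Lgen h V b ν u x * (starRingEnd ℂ) (u x) * (Real.exp (-V x / h) : ℂ)).re
        - h * ((∑ i, Complex.normSq (pdC u i x)) * Real.exp (-V x / h)) := by
  have hz : ∑ i, (pdR (fun y => b y i) i x + h * pdR (fun y => ν y i) i x
            - (b x i * gradV V x i) / h - ν x i * gradV V x i) = 0 := by
    have h2 := hstat₂ x
    have h3 := hstat₃ x
    simp only [divg] at h2 h3
    rw [Finset.sum_sub_distrib, Finset.sum_sub_distrib, Finset.sum_add_distrib,
      ← Finset.mul_sum, ← Finset.sum_div, hstat₁ x, h2, h3]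
    simp
  have hL : (Lgen h V b ν u x * (starRingEnd ℂ) (u x)).re =
      ∑ i, (-h * (pdC (pdC u i) i x * (starRingEnd ℂ) (u x)).re
        + (gradV V x i + (b x i + h * ν x i)) * (pdC u i x * (starRingEnd ℂ) (u x)).re) := by
    have : Lgen h V b ν u x * (starRingEnd ℂ) (u x) =
      ∑ i, (((-h : ℝ) : ℂ) * (pdC (pdC u i) i x * (starRingEnd ℂ) (u x))
        + ((gradV V x i + (b x i + h * ν x i) : ℝ) : ℂ)
          * (pdC u i x * (starRingEnd ℂ) (u x))) := by
      simp only [Lgen, lapC, Finset.mul_sum, Finset.sum_mul, ← Finset.sum_add_distrib]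
      refine Finset.sum_congr rfl fun i _ => ?_
      push_cast
      ring
    rw [this, Complex.re_sum]
    simp only [Complex.add_re, Complex.re_ofReal_mul]
  simp only [pdR_flux hh hV hb hν hu]
  rw [← Finset.sum_mul, Complex.re_mul_ofReal, hL, Finset.sum_add_distrib, ← Finset.sum_mul, hz,
    ← mul_assoc, Finset.mul_sum, ← sub_mul,
    ← Finset.sum_sub_distrib, zero_mul, add_zero]
  congr 1
  refine Finset.sum_congr rfl fun i _ => ?_
  ring


/-- Under the stationarity conditions, the real part of the Dirichlet-type form of
`L_{V,b,ν}` in `L²(e^{−V/h} dx)` equals `h ∫ |∇u|² e^{−V/h} dx ≥ 0`. -/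
theorem Lgen_real_part_dirichlet_form
    (d : ℕ) (hd : 1 ≤ d)
    (V : (Fin d → ℝ) → ℝ) (b ν : (Fin d → ℝ) → Fin d → ℝ)
    (hV : ContDiff ℝ (⊤ : ℕ∞) V) (hb : ContDiff ℝ (⊤ : ℕ∞) b) (hν : ContDiff ℝ (⊤ : ℕ∞) ν)
    (hstat₁ : ∀ x, ∑ i, b x i * gradV V x i = 0)
    (hstat₂ : ∀ x, divg ν x = 0)
    (hstat₃ : ∀ x, divg b x = ∑ i, ν x i * gradV V x i)
    (h : ℝ) (hh : 0 < h)
    (u : (Fin d → ℝ) → ℂ)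
    (hu : ContDiff ℝ (⊤ : ℕ∞) u) (hu' : HasCompactSupport u) :
    (∫ x : Fin d → ℝ,
        Lgen h V b ν u x * (starRingEnd ℂ) (u x) * (Real.exp (-V x / h) : ℂ)).re
        = h * ∫ x : Fin d → ℝ, (∑ i, Complex.normSq (pdC u i x)) * Real.exp (-V x / h) ∧
      0 ≤ (∫ x : Fin d → ℝ,
        Lgen h V b ν u x * (starRingEnd ℂ) (u x) * (Real.exp (-V x / h) : ℂ)).re := by
  have hexp : Continuous fun x => Real.exp (-V x / h) :=
    Real.continuous_exp.comp (hV.continuous.neg.div_const h)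
  have hLint : Integrable (fun x => Lgen h V b ν u x * (starRingEnd ℂ) (u x)
      * (Real.exp (-V x / h) : ℂ)) := by
    refine Continuous.integrable_of_hasCompactSupport ?_
      (HasCompactSupport.intro hu'.isCompact fun x hx => by
        simp [image_eq_zero_of_notMem_tsupport hx])
    have hp := fun i => (contDiff_pdC hu i).continuous
    have hpp := fun i => (contDiff_pdC (contDiff_pdC hu i) i).continuous
    have hg : ∀ i, Continuous fun x => gradV V x i := fun i => (contDiff_pdR hV i).continuous
    have hbc := hb.continuous
    have hνc := hν.continuous
    have huc := hu.continuous
    refine Continuous.mul (Continuous.mul ?_ (Complex.continuous_conj.comp huc))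
      (Complex.continuous_ofReal.comp hexp)
    unfold Lgen lapC
    fun_prop
  have hDint : Integrable (fun x => (∑ i, Complex.normSq (pdC u i x)) * Real.exp (-V x / h)) := by
    refine Continuous.integrable_of_hasCompactSupport ?_
      (HasCompactSupport.intro hu'.isCompact fun x hx => by
        simp [pdC, fderiv_of_notMem_tsupport (𝕜 := ℝ) hx])
    exact (continuous_finsetSum _ fun i _ =>
      Complex.continuous_normSq.comp (contDiff_pdC hu i).continuous).mul hexp
  have hre : (∫ x : Fin d → ℝ,
        Lgen h V b ν u x * (starRingEnd ℂ) (u x) * (Real.exp (-V x / h) : ℂ)).re =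
      ∫ x : Fin d → ℝ,
        (Lgen h V b ν u x * (starRingEnd ℂ) (u x) * (Real.exp (-V x / h) : ℂ)).re :=
    (integral_re hLint).symm
  have hLre : Integrable (fun x =>
      (Lgen h V b ν u x * (starRingEnd ℂ) (u x) * (Real.exp (-V x / h) : ℂ)).re) := hLint.re
  have hmain : (∫ x : Fin d → ℝ,
        Lgen h V b ν u x * (starRingEnd ℂ) (u x) * (Real.exp (-V x / h) : ℂ)).re
        = h * ∫ x : Fin d → ℝ, (∑ i, Complex.normSq (pdC u i x)) * Real.exp (-V x / h) := by
    rw [hre, ← integral_const_mul, ← sub_eq_zero, ← integral_sub hLre (hDint.const_mul h)]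
    have hF := fun i => contDiff_flux (h := h) hV hb hν hu i
    have hFc := fun i => hasCompactSupport_flux (h := h) (V := V) (b := b) (ν := ν) hu' i
    calc _ = ∫ x, ∑ i, pdR (flux h V b ν u i) i x :=
          integral_congr_ae (.of_forall fun x =>
            (sum_pdR_flux hh.ne' hV hb hν hu hstat₁ hstat₂ hstat₃ x).symm)
      _ = ∑ i, ∫ x, pdR (flux h V b ν u i) i x :=
          integral_finsetSum _ fun i _ => integrable_pdR (hF i) (hFc i) i
      _ = 0 := Finset.sum_eq_zero fun i _ => integral_pdR_eq_zero (hF i) (hFc i) i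
  refine ⟨hmain, hmain ▸ mul_nonneg hh.le (integral_nonneg fun x => ?_)⟩
  exact mul_nonneg (Finset.sum_nonneg fun i _ => Complex.normSq_nonneg _) (Real.exp_pos _).le
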